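/- (Moments imply membership in 𝒦^α.) Let Ψ be a Borel probability measure on ℝ³ such that ∫_{ℝ³} |v|^α dΨ(v) < ∞ for some α ∈ (0, 2], and, in the case α > 1, assume additionally that ∫_{ℝ³} v_j dΨ(v) = 0 for j = 1, 2, 3. Then the characteristic function ψ(ξ) = ∫_{ℝ³} exp(−i v·ξ) dΨ(v) satisfies sup_{ξ≠0} |ψ(ξ) − 1|/|ξ|^α < ∞, i.e. ψ ∈ 𝒦^α. -/

import Mathlib

noncomputable section

open MeasureTheory Real Filter Metric Set
open scoped RealInnerProductSpace Topology

/-- ℝ³ as a Euclidean space. -/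
abbrev E3 : Type := EuclideanSpace ℝ (Fin 3)

/-- The surface measure on the unit sphere S² ⊂ ℝ³. -/
def sphμ : Measure (sphere (0 : E3) 1) := (volume : Measure E3).toSphere

/-- The characteristic function (Fourier transform) of a Borel measure on ℝ³,
`ψ(ξ) = ∫ e^{-i v·ξ} dΨ(v)`. -/
def charFn (Ψ : Measure E3) (ξ : E3) : ℂ :=
  ∫ v, Complex.exp (-(Complex.I * (⟪v, ξ⟫ : ℂ))) ∂Ψ

/-- `ψ` is a characteristic function of some Borel probability measure on ℝ³. -/
def IsCharFn (ψ : E3 → ℂ) : Prop :=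
  ∃ Ψ : Measure E3, IsProbabilityMeasure Ψ ∧ ψ = charFn Ψ

/-- Finiteness of `‖φ - 1‖_α`, i.e. the quantitative part of membership in `𝒦^α`. -/
def KBdd (α : ℝ) (φ : E3 → ℂ) : Prop :=
  ∃ C : ℝ, ∀ ξ : E3, ξ ≠ 0 → ‖φ ξ - 1‖ ≤ C * ‖ξ‖ ^ α

/-- Membership in the space `𝒦^α`. -/
def memK (α : ℝ) (φ : E3 → ℂ) : Prop := IsCharFn φ ∧ KBdd α φ

/-- The distance `‖φ - φ'‖_α = sup_{ξ ≠ 0} |φ(ξ) - φ'(ξ)|/|ξ|^α` on `𝒦^α`. -/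
def Kdist (α : ℝ) (φ φ' : E3 → ℂ) : ℝ :=
  ⨆ ξ : {ξ : E3 // ξ ≠ 0}, ‖φ ξ.1 - φ' ξ.1‖ / ‖(ξ.1 : E3)‖ ^ α

/-- `ξ⁺ = ξ/2 + (|ξ|/2)σ`. -/
def xiPlus (ξ : E3) (σ : sphere (0 : E3) 1) : E3 := (1/2 : ℝ) • ξ + (‖ξ‖ / 2) • (σ : E3)

/-- `ξ⁻ = ξ/2 - (|ξ|/2)σ`. -/
def xiMinus (ξ : E3) (σ : sphere (0 : E3) 1) : E3 := (1/2 : ℝ) • ξ - (‖ξ‖ / 2) • (σ : E3)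

/-- The Bobylev collision integrand at time `t`, frequency `ξ`, direction `σ`. -/
def bobylevIntegrand (b : ℝ → ℝ) (ψ : ℝ → E3 → ℂ) (t : ℝ) (ξ : E3)
    (σ : sphere (0 : E3) 1) : ℂ :=
  (b (⟪ξ, (σ : E3)⟫ / ‖ξ‖) : ℂ) *
    (ψ t (xiPlus ξ σ) * ψ t (xiMinus ξ σ) - ψ t ξ)

/-- `ψ : [0,∞) × ℝ³ → ℂ` is a solution of the Fourier-transformed (Bobylev)
homogeneous Boltzmann Cauchy problem with collision kernel `b` and initial datum `ψ₀`. -/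
structure IsBobylevSolution (b : ℝ → ℝ) (ψ : ℝ → E3 → ℂ) (ψ₀ : E3 → ℂ) : Prop where
  cont : ContinuousOn (fun p : ℝ × E3 => ψ p.1 p.2) (Set.Ici 0 ×ˢ Set.univ)
  init : ψ 0 = ψ₀
  isCharFn : ∀ t ≥ 0, IsCharFn (ψ t)
  integrable : ∀ t ≥ 0, ∀ ξ : E3, Integrable (bobylevIntegrand b ψ t ξ) sphμ
  eq : ∀ t ≥ 0, ∀ ξ : E3, HasDerivWithinAt (fun τ => ψ τ ξ)
      (∫ σ, bobylevIntegrand b ψ t ξ σ ∂sphμ) (Set.Ici 0) t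

/-- Continuity of `t ↦ ψ(t,·)` from `[0,∞)` into the metric space `(𝒦^α, ‖·‖_α)`. -/
def KContinuous (α : ℝ) (ψ : ℝ → E3 → ℂ) : Prop :=
  ∀ t₀ ∈ Set.Ici (0:ℝ), Tendsto (fun t => Kdist α (ψ t) (ψ t₀)) (𝓝[Set.Ici (0:ℝ)] t₀) (𝓝 0)

/-- The angular singularity assumption `b(cos θ) θ^{2+2s} → K` as `θ → 0+`. -/
def KernelSingular (b : ℝ → ℝ) (s K : ℝ) : Prop :=
  Tendsto (fun θ : ℝ => b (Real.cos θ) * θ ^ (2 + 2*s)) (𝓝[>] 0) (𝓝 K)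

/-!
For a frequency `t`, the difference between `charFun μ t` and the total mass of `μ` is the
integral of `exp (i x) - 1` at `x = ⟪v, t⟫`. This integrand is bounded both by `|x|` and by `2`,
hence by `2 |x| ^ α` when `α ≤ 1`. For `1 < α ≤ 2` the bound `|x|` is too weak near `0`; the
vanishing mean allows one to subtract the linear term `i x` under the integral, and
`exp (i x) - 1 - i x` is quadratic near `0` and linear at infinity. Cauchy–Schwarz then replaces
`|⟪v, t⟫| ^ α` by `‖v‖ ^ α * ‖t‖ ^ α`.
-/

section ExpBounds

variable {α : ℝ}

lemma norm_exp_ofReal_mul_I_sub_one_le (x : ℝ) : ‖Complex.exp (x * Complex.I) - 1‖ ≤ |x| := by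
  simpa only [mul_comm, Real.norm_eq_abs] using Real.norm_exp_I_mul_ofReal_sub_one_le (x := x)

lemma norm_exp_ofReal_mul_I_sub_one_le_two (x : ℝ) : ‖Complex.exp (x * Complex.I) - 1‖ ≤ 2 :=
  calc ‖Complex.exp (x * Complex.I) - 1‖
      ≤ ‖Complex.exp (x * Complex.I)‖ + ‖(1 : ℂ)‖ := norm_sub_le _ _
    _ = 2 := by rw [Complex.norm_exp_ofReal_mul_I, norm_one, one_add_one_eq_two]

lemma norm_exp_ofReal_mul_I_sub_one_le_two_mul_rpow (hα0 : 0 ≤ α) (hα1 : α ≤ 1) (x : ℝ) :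
    ‖Complex.exp (x * Complex.I) - 1‖ ≤ 2 * |x| ^ α := by
  rcases le_total |x| 1 with hx | hx
  · calc ‖Complex.exp (x * Complex.I) - 1‖
        ≤ |x| := norm_exp_ofReal_mul_I_sub_one_le x
      _ ≤ |x| ^ α := Real.self_le_rpow_of_le_one (abs_nonneg x) hx hα1
      _ ≤ 2 * |x| ^ α := le_mul_of_one_le_left (by positivity) one_le_two
  · calc ‖Complex.exp (x * Complex.I) - 1‖
        ≤ 2 := norm_exp_ofReal_mul_I_sub_one_le_two x
      _ ≤ 2 * |x| ^ α := le_mul_of_one_le_right zero_le_two (Real.one_le_rpow hx hα0)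

lemma norm_exp_ofReal_mul_I_sub_one_sub_le_two_mul_rpow (hα1 : 1 ≤ α) (hα2 : α ≤ 2) (x : ℝ) :
    ‖Complex.exp (x * Complex.I) - 1 - x * Complex.I‖ ≤ 2 * |x| ^ α := by
  have hnorm : ‖(x : ℂ) * Complex.I‖ = |x| := by simp
  rcases le_total |x| 1 with hx | hx
  · calc ‖Complex.exp (x * Complex.I) - 1 - x * Complex.I‖
        ≤ ‖(x : ℂ) * Complex.I‖ ^ 2 :=
          Complex.norm_exp_sub_one_sub_id_le (hnorm.trans_le hx)
      _ = |x| ^ (2 : ℝ) := by rw [hnorm, Real.rpow_two]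
      _ ≤ |x| ^ α :=
          Real.rpow_le_rpow_of_exponent_ge' (abs_nonneg x) hx (zero_le_one.trans hα1) hα2
      _ ≤ 2 * |x| ^ α := le_mul_of_one_le_left (by positivity) one_le_two
  · calc ‖Complex.exp (x * Complex.I) - 1 - x * Complex.I‖
        ≤ ‖Complex.exp (x * Complex.I) - 1‖ + ‖(x : ℂ) * Complex.I‖ := norm_sub_le _ _
      _ ≤ |x| + |x| := add_le_add (norm_exp_ofReal_mul_I_sub_one_le x) hnorm.le
      _ = 2 * |x| := (two_mul _).symm
      _ ≤ 2 * |x| ^ α :=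
          mul_le_mul_of_nonneg_left (Real.self_le_rpow_of_one_le hx hα1) zero_le_two

end ExpBounds

lemma integrable_of_integrable_norm_rpow {Ω F : Type*} [MeasurableSpace Ω] [NormedAddCommGroup F]
    {μ : Measure Ω} [IsFiniteMeasure μ] {f : Ω → F} {α : ℝ} (hf : AEStronglyMeasurable f μ)
    (hα1 : 1 ≤ α) (hmom : Integrable (fun ω ↦ ‖f ω‖ ^ α) μ) : Integrable f μ := by
  have hone : Integrable (fun ω ↦ ‖f ω‖ ^ (1 : ℝ)) μ :=
    integrable_norm_rpow_of_le hf zero_le_one (zero_le_one.trans hα1) hα1 hmom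
  simp only [Real.rpow_one] at hone
  exact (integrable_norm_iff hf).1 hone

section CharFun

variable {E : Type*} [SeminormedAddCommGroup E] [InnerProductSpace ℝ E]

lemma abs_inner_rpow_le {α : ℝ} (hα0 : 0 ≤ α) (v t : E) :
    |⟪v, t⟫| ^ α ≤ ‖v‖ ^ α * ‖t‖ ^ α :=
  calc |⟪v, t⟫| ^ α
      ≤ (‖v‖ * ‖t‖) ^ α := Real.rpow_le_rpow (abs_nonneg _) (abs_real_inner_le_norm v t) hα0
    _ = ‖v‖ ^ α * ‖t‖ ^ α := Real.mul_rpow (norm_nonneg v) (norm_nonneg t)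

variable [MeasurableSpace E] [OpensMeasurableSpace E] {μ : Measure E} {α : ℝ}

lemma integrable_abs_inner_rpow (hα0 : 0 ≤ α) (hmom : Integrable (fun v ↦ ‖v‖ ^ α) μ) (t : E) :
    Integrable (fun v ↦ |⟪v, t⟫| ^ α) μ := by
  refine (hmom.mul_const (‖t‖ ^ α)).mono' (by fun_prop) (ae_of_all _ fun v ↦ ?_)
  rw [Real.norm_of_nonneg (by positivity)]
  exact abs_inner_rpow_le hα0 v t

variable [IsFiniteMeasure μ]

lemma integrable_exp_inner_mul_I (t : E) :
    Integrable (fun v ↦ Complex.exp (⟪v, t⟫ * Complex.I)) μ :=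
  (BoundedContinuousFunction.innerProbChar t).integrable μ

lemma charFun_sub_measureReal_univ (t : E) :
    charFun μ t - μ.real univ = ∫ v, (Complex.exp (⟪v, t⟫ * Complex.I) - 1) ∂μ := by
  rw [integral_sub (integrable_exp_inner_mul_I t) (integrable_const 1), charFun_apply]
  simp

lemma charFun_sub_measureReal_univ_of_integral_inner_eq_zero {t : E}
    (hint : Integrable (fun v ↦ ⟪v, t⟫) μ) (hmean : ∫ v, ⟪v, t⟫ ∂μ = 0) :
    charFun μ t - μ.real univ =
      ∫ v, (Complex.exp (⟪v, t⟫ * Complex.I) - 1 - ⟪v, t⟫ * Complex.I) ∂μ := by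
  have hlin_zero : ∫ v, (⟪v, t⟫ : ℂ) * Complex.I ∂μ = 0 := by
    rw [integral_mul_const, integral_complex_ofReal, hmean, Complex.ofReal_zero, zero_mul]
  have hexp : Integrable (fun v ↦ Complex.exp (⟪v, t⟫ * Complex.I) - 1) μ :=
    (integrable_exp_inner_mul_I t).sub (integrable_const 1)
  have hlin : Integrable (fun v ↦ (⟪v, t⟫ : ℂ) * Complex.I) μ := hint.ofReal.mul_const Complex.I
  rw [integral_sub hexp hlin, hlin_zero, sub_zero, charFun_sub_measureReal_univ]

theorem norm_charFun_sub_measureReal_univ_le_integral_abs_inner_rpow {t : E}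
    (hα0 : 0 ≤ α) (hα2 : α ≤ 2)
    (hmom : Integrable (fun v ↦ |⟪v, t⟫| ^ α) μ) (hmean : 1 < α → ∫ v, ⟪v, t⟫ ∂μ = 0) :
    ‖charFun μ t - μ.real univ‖ ≤ 2 * ∫ v, |⟪v, t⟫| ^ α ∂μ := by
  rw [← integral_const_mul]
  rcases le_or_gt α 1 with hα1 | hα1
  · rw [charFun_sub_measureReal_univ]
    exact norm_integral_le_of_norm_le (hmom.const_mul 2)
      (ae_of_all _ fun v ↦ norm_exp_ofReal_mul_I_sub_one_le_two_mul_rpow hα0 hα1 ⟪v, t⟫)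
  · have hint : Integrable (fun v ↦ ⟪v, t⟫) μ :=
      integrable_of_integrable_norm_rpow (by fun_prop) hα1.le hmom
    rw [charFun_sub_measureReal_univ_of_integral_inner_eq_zero hint (hmean hα1)]
    exact norm_integral_le_of_norm_le (hmom.const_mul 2)
      (ae_of_all _ fun v ↦ norm_exp_ofReal_mul_I_sub_one_sub_le_two_mul_rpow hα1.le hα2 ⟪v, t⟫)

theorem moments_imply_memK_general {t : E} (hα0 : 0 ≤ α) (hα2 : α ≤ 2)
    (hmom : Integrable (fun v ↦ ‖v‖ ^ α) μ) (hmean : 1 < α → ∫ v, ⟪v, t⟫ ∂μ = 0) :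
    ‖charFun μ t - μ.real univ‖ ≤ 2 * (∫ v, ‖v‖ ^ α ∂μ) * ‖t‖ ^ α := by
  have hinner := integrable_abs_inner_rpow hα0 hmom t
  calc ‖charFun μ t - μ.real univ‖
      ≤ 2 * ∫ v, |⟪v, t⟫| ^ α ∂μ :=
        norm_charFun_sub_measureReal_univ_le_integral_abs_inner_rpow hα0 hα2 hinner hmean
    _ ≤ 2 * ∫ v, ‖v‖ ^ α * ‖t‖ ^ α ∂μ :=
        mul_le_mul_of_nonneg_left (integral_mono hinner (hmom.mul_const _)
          fun v ↦ abs_inner_rpow_le hα0 v t) zero_le_two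
    _ = 2 * (∫ v, ‖v‖ ^ α ∂μ) * ‖t‖ ^ α := by rw [integral_mul_const, mul_assoc]

end CharFun

lemma integral_inner_eq_zero_of_forall_integral_apply_eq_zero {Ω ι : Type*} [Fintype ι]
    [MeasurableSpace Ω] {μ : Measure Ω} {X : Ω → EuclideanSpace ℝ ι} (hX : Integrable X μ)
    (hmean : ∀ i, ∫ ω, X ω i ∂μ = 0) (t : EuclideanSpace ℝ ι) : ∫ ω, ⟪X ω, t⟫ ∂μ = 0 := by
  have hzero : ∫ ω, X ω ∂μ = 0 := by
    ext i
    rw [eval_integral_piLp hX.eval_piLp, hmean i, PiLp.zero_apply]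
  simp only [real_inner_comm t]
  rw [integral_inner hX, hzero, inner_zero_right]

lemma charFn_eq_charFun_neg (Ψ : Measure E3) (ξ : E3) : charFn Ψ ξ = charFun Ψ (-ξ) := by
  simp only [charFn, charFun_apply, inner_neg_right, Complex.ofReal_neg, neg_mul,
    mul_comm Complex.I]

/-- finite moments imply membership in `𝒦^α`. -/
theorem moments_imply_memK
    (Ψ : Measure E3) [IsProbabilityMeasure Ψ]
    (α : ℝ) (hα0 : 0 < α) (hα2 : α ≤ 2)
    (hmom : (∫⁻ v, ENNReal.ofReal (‖v‖ ^ α) ∂Ψ) < ⊤)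
    (hmean : 1 < α → ∀ j : Fin 3, (∫ v : E3, v j ∂Ψ) = 0) :
    ∃ C : ℝ, ∀ ξ : E3, ξ ≠ 0 → ‖charFn Ψ ξ - 1‖ ≤ C * ‖ξ‖ ^ α := by
  have hint : Integrable (fun v : E3 ↦ ‖v‖ ^ α) Ψ :=
    (lintegral_ofReal_ne_top_iff_integrable (measurable_norm.pow_const α).aestronglyMeasurable
      (ae_of_all _ fun v ↦ by positivity)).1 hmom.ne
  have hinner (hα1 : 1 < α) (t : E3) : ∫ v, ⟪v, t⟫ ∂Ψ = 0 :=
    integral_inner_eq_zero_of_forall_integral_apply_eq_zero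
      (integrable_of_integrable_norm_rpow aestronglyMeasurable_id hα1.le hint) (hmean hα1) t
  refine ⟨2 * ∫ v, ‖v‖ ^ α ∂Ψ, fun ξ _ ↦ ?_⟩
  simpa [charFn_eq_charFun_neg] using
    moments_imply_memK_general hα0.le hα2 hint fun hα1 ↦ hinner hα1 (-ξ)
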